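/- arXiv:2510.24252 — 8 statements merged into one kernel-verified Lean document; each statement's English description precedes it below -/
import Mathlib

section
/- Let α be a type with two distinct elements a and b. Define g_i : ℕ → Set (Set α) for i ∈ ℕ by g_i(n) = {{a}} if i ≤ n and g_i(n) = {{a},{b},{a,b}} if n < i. Then (g_i) is an increasing sequence of maps (pointwise inclusion of values), every value g_i(n) is a convex set of nonempty subsets, and: (1) {b} ∈ { ⋃_{n∈ℕ} ⋃𝒱_n | for each n ∈ ℕ, 𝒱_n is a nonempty subfamily of cl⁺(⋃_{i∈ℕ} g_i(n)) }; but (2) {b} ∉ cl⁺( ⋃_{i∈ℕ} { ⋃_{n∈ℕ} ⋃𝒱_n | for each n ∈ ℕ, 𝒱_n is a nonempty subfamily of g_i(n) } ). Consequently, Kleisli composition for the weak composite monad of the full powerset over the nonempty powerset does not preserve joins of ω-chains in its first argument. -/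
/-!
The value of the join at each `n` contains `{b}` because `n < i` for `i = n + 1`, so choosing `{b}`
at every `n` puts `{b}` in the composite with the join. For a fixed `i`, however, `g i i = {{a}}`
forces `a` into every member of the composite with `g i`, hence into every union of such members,
for all `i` at once. Convexity of the values is `clP_singleton` and `clP_triple`; the latter holds
since `{{a}, {b}, {a, b}}` consists of all nonempty subsets of `{a, b}`.
-/

/-- Convex closure for the composite of full powerset over nonempty powerset:
all unions `⋃₀ 𝒱` of nonempty (arbitrary-cardinality) subfamilies `𝒱 ⊆ 𝒜`. -/
def clP {α : Type*} (𝒜 : Set (Set α)) : Set (Set α) :=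
  { W | ∃ 𝒱 : Set (Set α), 𝒱 ⊆ 𝒜 ∧ 𝒱.Nonempty ∧ W = ⋃₀ 𝒱 }

theorem subset_clP {α : Type*} (𝒜 : Set (Set α)) : 𝒜 ⊆ clP 𝒜 := fun U hU =>
  ⟨{U}, by simpa using hU, Set.singleton_nonempty U, by simp⟩

theorem clP_singleton {α : Type*} (U : Set α) : clP {U} = {U} := by
  refine Set.Subset.antisymm ?_ (subset_clP _)
  rintro W ⟨𝒱, h𝒱, hne, rfl⟩
  rw [hne.subset_singleton_iff.mp h𝒱]
  simp

theorem mem_triple_iff {α : Type*} (a b : α) (W : Set α) :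
    W ∈ ({{a}, {b}, {a, b}} : Set (Set α)) ↔ W ⊆ {a, b} ∧ W.Nonempty := by
  rw [Set.subset_pair_iff_eq, Set.nonempty_iff_ne_empty]
  constructor
  · rintro (rfl | rfl | rfl) <;> simp [← Set.nonempty_iff_ne_empty]
  · rintro ⟨h, hne⟩
    simpa [hne] using h

theorem clP_triple {α : Type*} (a b : α) :
    clP ({{a}, {b}, {a, b}} : Set (Set α)) = {{a}, {b}, {a, b}} := by
  refine Set.Subset.antisymm ?_ (subset_clP _)
  rintro W ⟨𝒱, h𝒱, ⟨U, hU⟩, rfl⟩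
  rw [mem_triple_iff]
  exact ⟨Set.sUnion_subset fun V hV => ((mem_triple_iff a b V).mp (h𝒱 hV)).1,
    ((mem_triple_iff a b U).mp (h𝒱 hU)).2.mono (Set.subset_sUnion_of_mem hU)⟩

theorem stmt0 {α : Type*} (a b : α) (hab : a ≠ b)
    (g : ℕ → ℕ → Set (Set α))
    (hg : ∀ i n, g i n = if i ≤ n then {{a}} else {{a}, {b}, {a, b}}) :
    (∀ i n, g i n ⊆ g (i + 1) n) ∧
    (∀ i n, (∀ U ∈ g i n, U.Nonempty) ∧ clP (g i n) = g i n) ∧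
    ({b} ∈ { W : Set α | ∃ 𝒱 : ℕ → Set (Set α),
        (∀ n, 𝒱 n ⊆ clP (⋃ i, g i n) ∧ (𝒱 n).Nonempty) ∧ W = ⋃ n, ⋃₀ (𝒱 n) }) ∧
    ({b} ∉ clP (⋃ i, { W : Set α | ∃ 𝒱 : ℕ → Set (Set α),
        (∀ n, 𝒱 n ⊆ g i n ∧ (𝒱 n).Nonempty) ∧ W = ⋃ n, ⋃₀ (𝒱 n) })) ∧
    ({ W : Set α | ∃ 𝒱 : ℕ → Set (Set α),
        (∀ n, 𝒱 n ⊆ clP (⋃ i, g i n) ∧ (𝒱 n).Nonempty) ∧ W = ⋃ n, ⋃₀ (𝒱 n) } ≠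
      clP (⋃ i, { W : Set α | ∃ 𝒱 : ℕ → Set (Set α),
        (∀ n, 𝒱 n ⊆ g i n ∧ (𝒱 n).Nonempty) ∧ W = ⋃ n, ⋃₀ (𝒱 n) })) := by
  have h3 : {b} ∈ { W : Set α | ∃ 𝒱 : ℕ → Set (Set α),
      (∀ n, 𝒱 n ⊆ clP (⋃ i, g i n) ∧ (𝒱 n).Nonempty) ∧ W = ⋃ n, ⋃₀ (𝒱 n) } := by
    refine ⟨fun _ => {{b}}, fun n => ⟨?_, Set.singleton_nonempty _⟩, by simp⟩
    rw [Set.singleton_subset_iff]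
    refine subset_clP _ (Set.mem_iUnion.mpr ⟨n + 1, ?_⟩)
    simp [hg]
  have h4 : {b} ∉ clP (⋃ i, { W : Set α | ∃ 𝒱 : ℕ → Set (Set α),
      (∀ n, 𝒱 n ⊆ g i n ∧ (𝒱 n).Nonempty) ∧ W = ⋃ n, ⋃₀ (𝒱 n) }) := by
    rintro ⟨𝒲, h𝒲, ⟨W, hW⟩, hb⟩
    obtain ⟨i, 𝒱, h𝒱, rfl⟩ := Set.mem_iUnion.mp (h𝒲 hW)
    obtain ⟨U, hU⟩ := (h𝒱 i).2
    -- The diagonal position `n = i` is one where `g i` offers only `{a}`.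
    have hUa : U = {a} := by simpa [hg] using (h𝒱 i).1 hU
    have ha : a ∈ ({b} : Set α) := by
      rw [hb]
      exact ⟨_, hW, Set.mem_iUnion.mpr ⟨i, U, hU, by simp [hUa]⟩⟩
    exact hab ha
  refine ⟨fun i n => ?_, fun i n => ?_, h3, h4, fun h => h4 (h ▸ h3)⟩
  · rw [hg, hg]
    split_ifs
    · exact subset_rfl
    · simp
    · omega
    · exact subset_rfl
  · rw [hg]
    split_ifs
    · exact ⟨by simp, clP_singleton _⟩
    · exact ⟨fun U hU => ((mem_triple_iff a b U).mp hU).2, clP_triple a b⟩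
end

section
/- Let Y and Z be types and let bot : Y → Set (Finset Z) be the constant-∅ map. Define the Kleisli extension of a map h : Y → Set (Finset Z) on a family 𝒰 : Set (Finset Y) by h^$(𝒰) := { ⋃_{y∈u} ⋃𝒱_y | u ∈ 𝒰 (u a finite, possibly empty, subset of Y), and for each y ∈ u, 𝒱_y is a nonempty finite subfamily of h(y) }. Then for every 𝒰, bot^$(𝒰) = {∅} if the empty finite set ∅ belongs to 𝒰, and bot^$(𝒰) = ∅ otherwise. In particular, taking f : PUnit → Set (Finset Y) with f(*) = {∅}, one has bot^$(f(*)) = {∅} ≠ ∅, so Kleisli composition for the composite monad of full powerset over finite powerset is not left strict (precomposition does not preserve the bottom morphism). -/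
/-- The Kleisli extension `h^$` for the composite monad of the full powerset
over the finite (possibly empty) powerset monad:
`h^$(𝒰) = { ⋃_{y∈u} ⋃𝒱_y | u ∈ 𝒰, each 𝒱_y a nonempty finite subfamily of h(y) }`. -/
def kextPPf {Y Z : Type*} (h : Y → Set (Finset Z)) (𝒰 : Set (Finset Y)) : Set (Finset Z) :=
  { W | ∃ u ∈ 𝒰, ∃ 𝒱 : Y → Set (Finset Z),
      (∀ y ∈ u, 𝒱 y ⊆ h y ∧ (𝒱 y).Finite ∧ (𝒱 y).Nonempty) ∧
      (↑W : Set Z) = ⋃ y ∈ (u : Set Y), ⋃ V ∈ 𝒱 y, (V : Set Z) }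

/-- An admissible choice of nonempty `𝒱 y ⊆ ∅` exists only over the empty `u`, where the union
it produces is empty. -/
theorem mem_kextPPf_bot {Y Z : Type*} (𝒰 : Set (Finset Y)) (W : Finset Z) :
    W ∈ kextPPf (fun _ : Y => (∅ : Set (Finset Z))) 𝒰 ↔ ∅ ∈ 𝒰 ∧ W = ∅ := by
  constructor
  · rintro ⟨u, hu, 𝒱, h𝒱, hW⟩
    obtain rfl : u = ∅ := by
      refine Finset.eq_empty_of_forall_notMem fun y hy => ?_
      obtain ⟨hsub, -, V, hV⟩ := h𝒱 y hy
      exact hsub hV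
    exact ⟨hu, by simpa using hW⟩
  · rintro ⟨h, rfl⟩
    exact ⟨∅, h, fun _ => ∅, by simp, by simp⟩

theorem stmt1 (Y Z : Type*) :
    (∀ 𝒰 : Set (Finset Y),
      (∅ ∈ 𝒰 → kextPPf (fun _ : Y => (∅ : Set (Finset Z))) 𝒰 = {∅}) ∧
      (∅ ∉ 𝒰 → kextPPf (fun _ : Y => (∅ : Set (Finset Z))) 𝒰 = ∅)) ∧
    (∀ f : PUnit → Set (Finset Y), f PUnit.unit = {∅} →
      kextPPf (fun _ : Y => (∅ : Set (Finset Z))) (f PUnit.unit) = {∅} ∧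
      kextPPf (fun _ : Y => (∅ : Set (Finset Z))) (f PUnit.unit) ≠ ∅) := by
  have key : ∀ 𝒰 : Set (Finset Y), ∅ ∈ 𝒰 →
      kextPPf (fun _ : Y => (∅ : Set (Finset Z))) 𝒰 = {∅} := fun 𝒰 h => by
    ext W
    simp [mem_kextPPf_bot, h]
  refine ⟨fun 𝒰 => ⟨key 𝒰, fun h => ?_⟩, fun f hf => ?_⟩
  · ext W
    simp [mem_kextPPf_bot, h]
  · have h := key (f PUnit.unit) (by simp [hf])
    exact ⟨h, h ▸ Set.singleton_ne_empty _⟩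
end

section
/- Let X and Y be types, x₁ ≠ x₂ in X and y₁ ≠ y₂ in Y. Define the two double-strength composites of the composite monad ~PQ on a pair (𝒰, 𝒱) of convex families by L(𝒰,𝒱) := cl{ ⋃_{y∈V} (U_y × {y}) | V ∈ 𝒱, and for each y ∈ V, U_y ∈ 𝒰 } and R(𝒰,𝒱) := cl{ ⋃_{x∈U} ({x} × V_x) | U ∈ 𝒰, and for each x ∈ U, V_x ∈ 𝒱 }. Then for 𝒰 = {{x₁},{x₂},{x₁,x₂}} and 𝒱 = {{y₁,y₂}}, the set {(x₁,y₁),(x₂,y₂)} belongs to L(𝒰,𝒱) but not to R(𝒰,𝒱); in particular L(𝒰,𝒱) ≠ R(𝒰,𝒱), so the two strength composites of the monad ~PQ disagree and ~PQ is not a commutative monad. -/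
/-!
When every `V x` is the same fibre `F`, each generator of `R(𝒰, {F})` is a product `U × F`, so every
member of `R(𝒰, {F})`, being a union of such products, is closed under replacing the second
coordinate by any element of `F`. The diagonal `{(x₁, y₁), (x₂, y₂)}` is not: it contains
`(x₁, y₁)` but not `(x₁, y₂)`. On the other side, `L` may choose a different `U y` for each `y`,
and the choice `y₁ ↦ {x₁}`, `y₂ ↦ {x₂}` produces the diagonal.
-/

/-- Families of nonempty finite subsets; convex closure: all unions of nonempty
finite subfamilies. -/
def clQ {Y : Type*} (𝒜 : Set (Finset Y)) : Set (Finset Y) :=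
  { W | ∃ 𝒱 : Set (Finset Y), 𝒱 ⊆ 𝒜 ∧ 𝒱.Finite ∧ 𝒱.Nonempty ∧
      (↑W : Set Y) = ⋃ V ∈ 𝒱, (V : Set Y) }

/-- The double-strength composite `μ ∘ ~PQ(str) ∘ stl` of the monad `~PQ`:
`L(𝒰,𝒱) = cl{ ⋃_{y∈V} (U_y × {y}) | V ∈ 𝒱, each U_y ∈ 𝒰 }`. -/
def Lcomp {X Y : Type*} (𝒰 : Set (Finset X)) (𝒱 : Set (Finset Y)) :
    Set (Finset (X × Y)) :=
  clQ { W | ∃ V ∈ 𝒱, ∃ U : Y → Finset X, (∀ y ∈ V, U y ∈ 𝒰) ∧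
      (↑W : Set (X × Y)) = ⋃ y ∈ (V : Set Y), (fun x => (x, y)) '' (U y : Set X) }

/-- The double-strength composite `μ ∘ ~PQ(stl) ∘ str` of the monad `~PQ`:
`R(𝒰,𝒱) = cl{ ⋃_{x∈U} ({x} × V_x) | U ∈ 𝒰, each V_x ∈ 𝒱 }`. -/
def Rcomp {X Y : Type*} (𝒰 : Set (Finset X)) (𝒱 : Set (Finset Y)) :
    Set (Finset (X × Y)) :=
  clQ { W | ∃ U ∈ 𝒰, ∃ V : X → Finset Y, (∀ x ∈ U, V x ∈ 𝒱) ∧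
      (↑W : Set (X × Y)) = ⋃ x ∈ (U : Set X), (fun y => (x, y)) '' (V x : Set Y) }

theorem subset_clQ {Y : Type*} (𝒜 : Set (Finset Y)) : 𝒜 ⊆ clQ 𝒜 := fun W hW =>
  ⟨{W}, by simpa using hW, Set.finite_singleton W, Set.singleton_nonempty W, by simp⟩

/-- Members of `R(𝒰, {F})` are saturated in the `F`-direction. -/
theorem mk_mem_of_mem_Rcomp_singleton {X Y : Type*} {𝒰 : Set (Finset X)} {F : Finset Y}
    {W : Finset (X × Y)} (hW : W ∈ Rcomp 𝒰 {F}) {x : X} {y y' : Y}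
    (hxy : (x, y) ∈ W) (hy' : y' ∈ F) : (x, y') ∈ W := by
  obtain ⟨𝒢, h𝒢, -, -, hW⟩ := hW
  rw [← Finset.mem_coe, hW, Set.mem_iUnion₂] at hxy ⊢
  obtain ⟨G, hG, hxG⟩ := hxy
  refine ⟨G, hG, ?_⟩
  obtain ⟨U, -, V, hV, hGU⟩ := h𝒢 hG
  rw [hGU, Set.mem_iUnion₂] at hxG ⊢
  obtain ⟨a, ha, b, -, hab⟩ := hxG
  obtain ⟨rfl, -⟩ := Prod.mk.inj hab
  have hVF : V a = F := hV a ha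
  exact ⟨a, ha, y', by simpa [hVF] using hy', rfl⟩

theorem stmt2 {X Y : Type*} [DecidableEq X] [DecidableEq Y]
    (x₁ x₂ : X) (y₁ y₂ : Y) (hx : x₁ ≠ x₂) (hy : y₁ ≠ y₂) :
    ({(x₁, y₁), (x₂, y₂)} : Finset (X × Y)) ∈
        Lcomp ({{x₁}, {x₂}, {x₁, x₂}} : Set (Finset X)) ({{y₁, y₂}} : Set (Finset Y)) ∧
    ({(x₁, y₁), (x₂, y₂)} : Finset (X × Y)) ∉
        Rcomp ({{x₁}, {x₂}, {x₁, x₂}} : Set (Finset X)) ({{y₁, y₂}} : Set (Finset Y)) ∧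
    Lcomp ({{x₁}, {x₂}, {x₁, x₂}} : Set (Finset X)) ({{y₁, y₂}} : Set (Finset Y)) ≠
      Rcomp ({{x₁}, {x₂}, {x₁, x₂}} : Set (Finset X)) ({{y₁, y₂}} : Set (Finset Y)) := by
  have hL : ({(x₁, y₁), (x₂, y₂)} : Finset (X × Y)) ∈
      Lcomp ({{x₁}, {x₂}, {x₁, x₂}} : Set (Finset X)) ({{y₁, y₂}} : Set (Finset Y)) := by
    refine subset_clQ _ ⟨{y₁, y₂}, rfl, fun y => if y = y₁ then {x₁} else {x₂}, ?_, ?_⟩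
    · intro y _
      by_cases h : y = y₁ <;> simp [h]
    · simp [hy.symm, Set.pair_comm (x₁, y₁)]
  have hR : ({(x₁, y₁), (x₂, y₂)} : Finset (X × Y)) ∉
      Rcomp ({{x₁}, {x₂}, {x₁, x₂}} : Set (Finset X)) ({{y₁, y₂}} : Set (Finset Y)) := by
    intro h
    have h12 : (x₁, y₂) ∈ ({(x₁, y₁), (x₂, y₂)} : Finset (X × Y)) :=
      mk_mem_of_mem_Rcomp_singleton h (y := y₁) (by simp) (by simp)
    simp [hx, hy.symm] at h12
  exact ⟨hL, hR, fun h => hR (h ▸ hL)⟩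
end

section
/- Let f : X → Set (Finset Y) have convex values consisting of nonempty finite subsets of Y, and let (g_n : Y → Set (Finset Z))_{n∈ℕ} be a pointwise increasing sequence of maps whose values are convex families of nonempty finite subsets of Z. Then for every x ∈ X, ((⋁_n g_n) ⊙ f)(x) = cl( ⋃_{n∈ℕ} (g_n ⊙ f)(x) ); that is, Kleisli composition for the composite monad ~PQ preserves joins of ω-chains in its first (outer) argument. -/
/-- Kleisli composition for the composite monad `~PQ` of full powerset over
nonempty finite powerset:
`(g ⊙ f)(x) = { ⋃_{y∈U} ⋃𝒱_y | U ∈ f x, each 𝒱_y a nonempty finite subfamily of g y }`. -/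
def kcomp {X Y Z : Type*} (g : Y → Set (Finset Z)) (f : X → Set (Finset Y)) :
    X → Set (Finset Z) := fun x =>
  { W | ∃ U ∈ f x, ∃ 𝒱 : Y → Set (Finset Z),
      (∀ y ∈ U, 𝒱 y ⊆ g y ∧ (𝒱 y).Finite ∧ (𝒱 y).Nonempty) ∧
      (↑W : Set Z) = ⋃ y ∈ (U : Set Y), ⋃ V ∈ 𝒱 y, (V : Set Z) }

/-- Compactness of finite sets in a chain, in the `∀ᶠ` form, which allows combining the stages
for finitely many sets. -/
theorem eventually_subset_of_finite {α : Type*} {A : ℕ → Set α} (hA : Monotone A) {s : Set α}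
    (hs : s.Finite) (hsA : s ⊆ ⋃ n, A n) : ∀ᶠ n in Filter.atTop, s ⊆ A n := by
  have h : ∀ᶠ n in Filter.atTop, ∀ a ∈ s, a ∈ A n := by
    rw [Filter.eventually_all_finite hs]
    intro a ha
    obtain ⟨m, hm⟩ := Set.mem_iUnion.1 (hsA ha)
    filter_upwards [Filter.eventually_ge_atTop m] with n hn using hA hn hm
  exact h

theorem clQ_iUnion_subset {Y : Type*} {A : ℕ → Set (Finset Y)} (hA : Monotone A)
    (hconv : ∀ n, clQ (A n) = A n) : clQ (⋃ n, A n) ⊆ ⋃ n, A n := by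
  rintro W ⟨𝒱, h𝒱, hfin, hne, hW⟩
  obtain ⟨n, hn⟩ := (eventually_subset_of_finite hA hfin h𝒱).exists
  exact Set.mem_iUnion.2 ⟨n, hconv n ▸ ⟨𝒱, hn, hfin, hne, hW⟩⟩

theorem stmt3 {X Y Z : Type*} (f : X → Set (Finset Y)) (g : ℕ → Y → Set (Finset Z))
    (hfne : ∀ x, ∀ U ∈ f x, U.Nonempty) (hfconv : ∀ x, clQ (f x) = f x)
    (hgne : ∀ n y, ∀ V ∈ g n y, V.Nonempty) (hgconv : ∀ n y, clQ (g n y) = g n y)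
    (hgmono : ∀ n y, g n y ⊆ g (n + 1) y) (x : X) :
    kcomp (fun y => clQ (⋃ n, g n y)) f x = clQ (⋃ n, kcomp (g n) f x) := by
  have hmono : ∀ y, Monotone fun n => g n y := fun y =>
    monotone_nat_of_le_succ fun n => hgmono n y
  apply Set.Subset.antisymm
  · rintro W ⟨U, hU, 𝒱, h𝒱, hW⟩
    have hev : ∀ᶠ n in Filter.atTop, ∀ y ∈ U, 𝒱 y ⊆ g n y := by
      rw [Filter.eventually_all_finset]
      intro y hy
      exact eventually_subset_of_finite (hmono y) (h𝒱 y hy).2.1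
        ((h𝒱 y hy).1.trans (clQ_iUnion_subset (hmono y) fun n => hgconv n y))
    obtain ⟨N, hN⟩ := hev.exists
    exact subset_clQ _ (Set.mem_iUnion.2
      ⟨N, U, hU, 𝒱, fun y hy => ⟨hN y hy, (h𝒱 y hy).2⟩, hW⟩)
  · rintro W ⟨𝒲, h𝒲, hfin, hne, hW⟩
    have hwit : ∀ V : 𝒲, ∃ n, V.1 ∈ kcomp (g n) f x := fun V => Set.mem_iUnion.1 (h𝒲 V.2)
    choose n U hU 𝒱 h𝒱 hV using hwit
    have : Finite 𝒲 := hfin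
    have : Nonempty 𝒲 := hne.to_subtype
    have hUfin : (⋃ V, (U V : Set Y)).Finite := Set.finite_iUnion fun V => (U V).finite_toSet
    refine ⟨hUfin.toFinset, ?_, fun y => ⋃ V, ⋃ _ : y ∈ U V, 𝒱 V y, ?_, ?_⟩
    · rw [← hfconv x]
      exact ⟨Set.range U, Set.range_subset_iff.2 hU, Set.finite_range U, Set.range_nonempty U,
        by rw [hUfin.coe_toFinset, Set.biUnion_range]⟩
    · intro y hy
      refine ⟨?_, ?_, ?_⟩
      · refine Set.iUnion_subset fun V => Set.iUnion_subset fun hyV => ?_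
        exact ((h𝒱 V y hyV).1.trans (Set.subset_iUnion (fun n => g n y) (n V))).trans
          (subset_clQ _)
      · exact Set.finite_iUnion fun V => Set.finite_iUnion fun hyV => (h𝒱 V y hyV).2.1
      · obtain ⟨V, hyV⟩ : ∃ V, y ∈ U V := by simpa using hy
        obtain ⟨S, hS⟩ := (h𝒱 V y hyV).2.2
        exact ⟨S, Set.mem_iUnion₂.2 ⟨V, hyV, hS⟩⟩
    · have hW' : (W : Set Z) = ⋃ V : 𝒲, (V.1 : Set Z) := by rw [hW, Set.biUnion_eq_iUnion]
      rw [hW']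
      ext z
      simp only [hV, Set.mem_iUnion, Set.Finite.coe_toFinset, Finset.mem_coe, exists_prop]
      constructor
      · rintro ⟨V, y, hy, S, hS, hz⟩
        exact ⟨y, ⟨V, hy⟩, S, ⟨V, hy, hS⟩, hz⟩
      · rintro ⟨y, -, S, ⟨V, hy, hS⟩, hz⟩
        exact ⟨V, y, hy, S, hS, hz⟩
end

section
/- Let g : Y → Set (Finset Z) have convex values consisting of nonempty finite subsets of Z, and let (f_n : X → Set (Finset Y))_{n∈ℕ} be a pointwise increasing sequence of maps whose values are convex families of nonempty finite subsets of Y. Then for every x ∈ X, (g ⊙ (⋁_n f_n))(x) = cl( ⋃_{n∈ℕ} (g ⊙ f_n)(x) ); that is, Kleisli composition for the composite monad ~PQ preserves joins of ω-chains in its second (inner) argument. -/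
/-- The union of an increasing sequence of convex families is convex. -/
theorem clQ_iUnion_eq {Y : Type*} (F : ℕ → Set (Finset Y)) (hmono : Monotone F)
    (hconv : ∀ n, clQ (F n) = F n) : clQ (⋃ n, F n) = ⋃ n, F n := by
  refine Set.Subset.antisymm ?_ (subset_clQ _)
  rintro U ⟨𝒱, hsub, hfin, hne, hU⟩
  have hex : ∀ V, ∃ n, V ∈ 𝒱 → V ∈ F n := fun V => by
    by_cases hV : V ∈ 𝒱
    · obtain ⟨n, hn⟩ := Set.mem_iUnion.1 (hsub hV)
      exact ⟨n, fun _ => hn⟩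
    · exact ⟨0, fun h => absurd h hV⟩
  choose n hn using hex
  obtain ⟨N, hN⟩ := (hfin.image n).bddAbove
  refine Set.mem_iUnion.2 ⟨N, ?_⟩
  rw [← hconv N]
  exact ⟨𝒱, fun V hV => hmono (hN ⟨V, hV, rfl⟩) (hn V hV), hfin, hne, hU⟩

theorem stmt4 {X Y Z : Type*} (g : Y → Set (Finset Z)) (f : ℕ → X → Set (Finset Y))
    (hgne : ∀ y, ∀ V ∈ g y, V.Nonempty) (hgconv : ∀ y, clQ (g y) = g y)
    (hfne : ∀ n x, ∀ U ∈ f n x, U.Nonempty) (hfconv : ∀ n x, clQ (f n x) = f n x)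
    (hfmono : ∀ n x, f n x ⊆ f (n + 1) x) (x : X) :
    kcomp g (fun x => clQ (⋃ n, f n x)) x = clQ (⋃ n, kcomp g (f n) x) := by
  classical
  ext W
  constructor
  · rintro ⟨U, hU, 𝒱, h𝒱, hW⟩
    change U ∈ clQ (⋃ n, f n x) at hU
    rw [clQ_iUnion_eq (fun n => f n x) (monotone_nat_of_le_succ fun n => hfmono n x)
      fun n => hfconv n x] at hU
    obtain ⟨n, hn⟩ := Set.mem_iUnion.1 hU
    exact subset_clQ _ (Set.mem_iUnion.2 ⟨n, U, hn, 𝒱, h𝒱, hW⟩)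
  · rintro ⟨𝒲, hsub, hfin, ⟨W₀, hW₀⟩, hW⟩
    have hex : ∀ V ∈ 𝒲, ∃ U ∈ ⋃ n, f n x, ∃ 𝒱 : Y → Set (Finset Z),
        (∀ y ∈ U, 𝒱 y ⊆ g y ∧ (𝒱 y).Finite ∧ (𝒱 y).Nonempty) ∧
        (↑V : Set Z) = ⋃ y ∈ (U : Set Y), ⋃ V ∈ 𝒱 y, (V : Set Z) := by
      intro V hV
      obtain ⟨n, U, hU, h⟩ := Set.mem_iUnion.1 (hsub hV)
      exact ⟨U, Set.mem_iUnion.2 ⟨n, hU⟩, h⟩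
    choose! U hU 𝒱 h𝒱 hV using hex
    refine ⟨hfin.toFinset.biUnion U, ⟨U '' 𝒲, ?_, hfin.image U, ⟨_, W₀, hW₀, rfl⟩, ?_⟩,
      fun y => ⋃ V ∈ {V | V ∈ 𝒲 ∧ y ∈ U V}, 𝒱 V y, ?_, ?_⟩
    · rintro _ ⟨V, hV, rfl⟩
      exact hU V hV
    · ext y
      simp
    · intro y hy
      obtain ⟨V, hV𝒲, hyV⟩ := Finset.mem_biUnion.1 hy
      rw [Set.Finite.mem_toFinset] at hV𝒲
      refine ⟨Set.iUnion₂_subset fun V h => (h𝒱 V h.1 y h.2).1,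
        (hfin.subset fun V h => h.1).biUnion fun V h => (h𝒱 V h.1 y h.2).2.1, ?_⟩
      obtain ⟨T, hT⟩ := (h𝒱 V hV𝒲 y hyV).2.2
      exact ⟨T, Set.mem_iUnion₂.2 ⟨V, ⟨hV𝒲, hyV⟩, hT⟩⟩
    · rw [hW, Set.iUnion₂_congr hV]
      ext z
      simp only [Set.mem_iUnion, Set.mem_ofPred_eq, Finset.mem_coe, Finset.mem_biUnion,
        Set.Finite.mem_toFinset, exists_prop]
      constructor
      · rintro ⟨V, hV, y, hy, T, hT, hz⟩
        exact ⟨y, ⟨V, hV, hy⟩, T, ⟨V, ⟨hV, hy⟩, hT⟩, hz⟩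
      · rintro ⟨y, -, T, ⟨V, ⟨hV, hy⟩, hT⟩, hz⟩
        exact ⟨V, hV, y, hy, T, hT, hz⟩
end

section
/- Let f : X → Set (PMF Y) have convex values consisting of finitely supported PMFs, and let (g_n : Y → Set (PMF Z))_{n∈ℕ} be a pointwise increasing sequence of maps whose values are convex sets of finitely supported PMFs. Then for every x ∈ X, ((⋁_n g_n) ⊙ f)(x) = cl( ⋃_{n∈ℕ} (g_n ⊙ f)(x) ); that is, Kleisli composition for the composite monad ~PD preserves joins of ω-chains in its first (outer) argument. -/
/-!
Left to right, let `χ` be given by `φ ∈ f x` and a family `Φ`. For each `y` in the finite support of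
`φ`, only finitely many elements of `⋃ n, g n y` are involved in building `(Φ y).bind id`, so
monotonicity and convexity place that PMF in a single `g n y` (`exists_bind_mem`, used twice).
Finitely many `y` matter, so one index `N` works for all of them, and `χ` lies in
`kcompD (g N) f x`.

Right to left, finiteness and monotonicity again place the support of the mixing distribution `Ψ` in
one `kcompD (g N) f x`, and it suffices that such a composite is closed under finite mixtures. If
each `a` in the support of `Ψ` is given by `φ a ∈ f x` and `Φ a`, the mixture is given by the PMF
`Ψ.bind φ`, which is in `f x` by convexity, together with the average of the `Φ a y` with respect to
the posterior distribution of `a` given `y`. Bayes' formula (`bind_posterior`) shows that this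
produces the right PMF.
-/

/-- Convex closure for sets of finitely supported PMFs: all `Ψ.bind id` with
`Ψ` a finitely supported PMF on `PMF Z` supported inside the set.
A set `A` is convex when `clD A = A`. -/
def clD {Z : Type*} (A : Set (PMF Z)) : Set (PMF Z) :=
  { χ | ∃ Ψ : PMF (PMF Z), Ψ.support.Finite ∧ Ψ.support ⊆ A ∧ χ = Ψ.bind id }

/-- Kleisli composition for the composite monad `~PD` of full powerset over the
finite distribution monad. -/
def kcompD {X Y Z : Type*} (g : Y → Set (PMF Z)) (f : X → Set (PMF Y)) :
    X → Set (PMF Z) := fun x =>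
  { χ | ∃ φ ∈ f x, ∃ Φ : Y → PMF (PMF Z),
      (∀ y ∈ φ.support, (Φ y).support.Finite ∧ (Φ y).support ⊆ g y) ∧
      χ = φ.bind fun y => (Φ y).bind id }

/-- The posterior distribution on `A` given the observation `b`, for the prior `p` and the
likelihoods `k`. At a `b` of probability zero its value is immaterial, and the prior is used. -/
noncomputable def posterior {A B : Type*} (p : PMF A) (k : A → PMF B) (b : B) : PMF A :=
  open Classical in
  if h : (p.bind k) b = 0 then p else
    PMF.normalize (fun a => p a * k a b)
      (by rwa [PMF.bind_apply] at h)
      (by rw [← PMF.bind_apply]; exact PMF.apply_ne_top _ _)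

/-- Bayes' formula. -/
lemma posterior_apply_mul {A B : Type*} (p : PMF A) (k : A → PMF B) (b : B) (a : A) :
    (p.bind k) b * posterior p k b a = p a * k a b := by
  by_cases h : (p.bind k) b = 0
  · rw [h, zero_mul]
    rw [PMF.bind_apply, ENNReal.tsum_eq_zero] at h
    exact (h a).symm
  · rw [posterior, dif_neg h, PMF.normalize_apply, ← PMF.bind_apply, mul_left_comm,
      ENNReal.mul_inv_cancel h (PMF.apply_ne_top _ _), mul_one]

lemma mem_support_of_mem_posterior {A B : Type*} {p : PMF A} {k : A → PMF B} {b : B} {a : A}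
    (hb : b ∈ (p.bind k).support) (ha : a ∈ (posterior p k b).support) :
    a ∈ p.support ∧ b ∈ (k a).support := by
  rw [PMF.mem_support_iff] at *
  have h := posterior_apply_mul p k b a
  rw [PMF.mem_support_iff]
  exact mul_ne_zero_iff.1 (h ▸ mul_ne_zero hb ha)

/-- Sampling `a` and then `b` given `a` amounts to sampling `b` from its marginal and then `a` from
the posterior. -/
lemma bind_posterior {A B C : Type*} (p : PMF A) (k : A → PMF B) (h : A → B → PMF C) :
    ((p.bind k).bind fun b => (posterior p k b).bind fun a => h a b) =
      p.bind fun a => (k a).bind (h a) := by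
  ext c
  simp only [PMF.bind_apply (p := p.bind k), PMF.bind_apply (p := p) (f := fun a => (k a).bind (h a)),
    PMF.bind_apply (p := posterior p k _), PMF.bind_apply (p := k _), ← ENNReal.tsum_mul_left]
  rw [ENNReal.tsum_comm]
  refine tsum_congr fun a => tsum_congr fun b => ?_
  rw [← mul_assoc, posterior_apply_mul, mul_assoc]

lemma bind_congr_support {A B : Type*} (p : PMF A) {k l : A → PMF B}
    (h : ∀ a ∈ p.support, k a = l a) : p.bind k = p.bind l := by
  ext b
  simp only [PMF.bind_apply]
  refine tsum_congr fun a => ?_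
  by_cases ha : p a = 0
  · simp [ha]
  · rw [h a ((PMF.mem_support_iff _ _).2 ha)]

lemma mem_clD_of_mem {Z : Type*} {A : Set (PMF Z)} {χ : PMF Z} (h : χ ∈ A) : χ ∈ clD A :=
  ⟨PMF.pure χ, by simp, by simpa using h, by simp⟩

/-- Finitely many properties, each holding eventually along an increasing family, hold at a common
index. -/
lemma exists_common_index {A : Type*} {S : Set A} (hS : S.Finite) {P : ℕ → A → Prop}
    (hP : ∀ a, ∀ m n, m ≤ n → P m a → P n a) (h : ∀ a ∈ S, ∃ n, P n a) :
    ∃ N, ∀ a ∈ S, P N a := by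
  choose! n hn using h
  obtain ⟨N, hN⟩ := (hS.image n).bddAbove
  exact ⟨N, fun a ha => hP a _ _ (hN ⟨a, ha, rfl⟩) (hn a ha)⟩

/-- The union of an increasing sequence of convex sets is convex. -/
lemma exists_bind_mem {Z : Type*} {G : ℕ → Set (PMF Z)} (hG : Monotone G)
    (hconv : ∀ n, clD (G n) = G n) {Ψ : PMF (PMF Z)} (hfin : Ψ.support.Finite)
    (hsub : ∀ χ ∈ Ψ.support, ∃ n, χ ∈ G n) : ∃ n, Ψ.bind id ∈ G n := by
  obtain ⟨N, hN⟩ := exists_common_index hfin (P := fun n χ => χ ∈ G n)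
    (fun _ _ _ h hm => hG h hm) hsub
  refine ⟨N, ?_⟩
  rw [← hconv N]
  exact ⟨Ψ, hfin, hN, rfl⟩

/-- A Kleisli composite is convex as soon as its inner argument is; no convexity of the outer
argument is needed. -/
lemma bind_mem_kcompD {X Y Z : Type*} {f : X → Set (PMF Y)} {g : Y → Set (PMF Z)} {x : X}
    (hconv : clD (f x) = f x) {Ψ : PMF (PMF Z)} (hfin : Ψ.support.Finite)
    (hsub : Ψ.support ⊆ kcompD g f x) : Ψ.bind id ∈ kcompD g f x := by
  have hne : Nonempty (PMF Y) := by
    obtain ⟨χ, hχ⟩ := Ψ.support_nonempty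
    obtain ⟨φ, -⟩ := hsub hχ
    exact ⟨φ⟩
  have key : ∀ χ, ∃ φ : PMF Y, ∃ Φ : Y → PMF (PMF Z), χ ∈ Ψ.support → φ ∈ f x ∧
      (∀ y ∈ φ.support, (Φ y).support.Finite ∧ (Φ y).support ⊆ g y) ∧
      χ = φ.bind fun y => (Φ y).bind id := by
    intro χ
    by_cases h : χ ∈ Ψ.support
    · obtain ⟨φ, h1, Φ, h2⟩ := hsub h
      exact ⟨φ, Φ, fun _ => ⟨h1, h2⟩⟩
    · exact ⟨hne.some, fun _ => Ψ, fun h' => absurd h' h⟩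
  choose φ Φ h using key
  refine ⟨Ψ.bind φ, ?_, fun y => (posterior Ψ φ y).bind fun χ => Φ χ y, ?_, ?_⟩
  · rw [← hconv]
    refine ⟨Ψ.map φ, ?_, ?_, ?_⟩
    · rw [PMF.support_map]
      exact hfin.image φ
    · rw [PMF.support_map]
      rintro _ ⟨χ, hχ, rfl⟩
      exact (h χ hχ).1
    · rw [PMF.bind_map]
      rfl
  · intro y hy
    have hs : ∀ χ ∈ (posterior Ψ φ y).support, χ ∈ Ψ.support ∧ y ∈ (φ χ).support :=
      fun χ hχ => mem_support_of_mem_posterior hy hχ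
    rw [PMF.support_bind]
    constructor
    · refine Set.Finite.biUnion (hfin.subset fun χ hχ => (hs χ hχ).1) fun χ hχ => ?_
      exact ((h χ (hs χ hχ).1).2.1 y (hs χ hχ).2).1
    · refine Set.iUnion₂_subset fun χ hχ => ?_
      exact ((h χ (hs χ hχ).1).2.1 y (hs χ hχ).2).2
  · simp only [PMF.bind_bind (posterior Ψ φ _)]
    rw [bind_posterior Ψ φ fun χ y => (Φ χ y).bind id]
    exact bind_congr_support Ψ fun χ hχ => (h χ hχ).2.2

theorem stmt5 {X Y Z : Type*} (f : X → Set (PMF Y)) (g : ℕ → Y → Set (PMF Z))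
    (hffin : ∀ x, ∀ φ ∈ f x, φ.support.Finite) (hfconv : ∀ x, clD (f x) = f x)
    (hgfin : ∀ n y, ∀ χ ∈ g n y, χ.support.Finite) (hgconv : ∀ n y, clD (g n y) = g n y)
    (hgmono : ∀ n y, g n y ⊆ g (n + 1) y) (x : X) :
    kcompD (fun y => clD (⋃ n, g n y)) f x = clD (⋃ n, kcompD (g n) f x) := by
  have hmono : ∀ y, Monotone fun n => g n y := fun y => monotone_nat_of_le_succ fun n => hgmono n y
  apply Set.Subset.antisymm
  · rintro χ ⟨φ, hφ, Φ, hΦ, rfl⟩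
    have hy : ∀ y ∈ φ.support, ∃ n, (Φ y).bind id ∈ g n y := by
      intro y hy
      refine exists_bind_mem (hmono y) (fun n => hgconv n y) (hΦ y hy).1 fun χ hχ => ?_
      obtain ⟨Ψ, hfin, hsub, rfl⟩ := (hΦ y hy).2 hχ
      exact exists_bind_mem (hmono y) (fun n => hgconv n y) hfin
        fun ψ hψ => Set.mem_iUnion.1 (hsub hψ)
    obtain ⟨N, hN⟩ := exists_common_index (hffin x φ hφ) (P := fun n y => (Φ y).bind id ∈ g n y)
      (fun y _ _ h hm => hmono y h hm) hy
    refine mem_clD_of_mem (Set.mem_iUnion.2 ⟨N, φ, hφ, fun y => PMF.pure ((Φ y).bind id), ?_, ?_⟩)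
    · intro y hy
      simpa using hN y hy
    · simp
  · rintro _ ⟨Ψ, hfin, hsub, rfl⟩
    obtain ⟨N, hN⟩ := exists_common_index hfin (P := fun n χ => χ ∈ kcompD (g n) f x)
      (by
        rintro χ m n hmn ⟨φ, hφ, Φ, hΦ, hχ⟩
        exact ⟨φ, hφ, Φ, fun y hy => ⟨(hΦ y hy).1, (hΦ y hy).2.trans (hmono y hmn)⟩, hχ⟩)
      (fun χ hχ => Set.mem_iUnion.1 (hsub hχ))
    obtain ⟨φ, hφ, Φ, hΦ, hχ⟩ := bind_mem_kcompD (hfconv x) hfin hN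
    exact ⟨φ, hφ, Φ, fun y hy => ⟨(hΦ y hy).1, (hΦ y hy).2.trans fun ψ hψ =>
      mem_clD_of_mem (Set.mem_iUnion.2 ⟨N, hψ⟩)⟩, hχ⟩
end

section
/- Let f : X → PMF Y and g : Y → PMF Z be maps all of whose values are finitely supported PMFs. Then the Kleisli composite for ~PD of the singleton-valued lifts Kf : x ↦ {f x} and Kg : y ↦ {g y} is again singleton-valued and equals the lift of the PMF bind: (Kg ⊙ Kf)(x) = { (f x).bind g } for every x ∈ X. Moreover, cl({φ}) = {φ} for every finitely supported PMF φ, so Kf takes values in convex sets. -/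
/-- A distribution on PMFs supported in `{φ}` is the point mass at `φ`, so its barycentre is `φ`. -/
theorem bind_id_eq_of_support_subset_singleton {Z : Type*} {Ψ : PMF (PMF Z)} {φ : PMF Z}
    (h : Ψ.support ⊆ {φ}) : Ψ.bind id = φ := by
  have hs : Ψ.support = {φ} :=
    (Set.Nonempty.subset_singleton_iff Ψ.support_nonempty).1 h
  have hφ : Ψ φ = 1 := (PMF.apply_eq_one_iff Ψ φ).2 hs
  ext z
  rw [PMF.bind_apply, tsum_eq_single φ]
  · simp [hφ]
  · intro ψ hψ
    rw [(PMF.apply_eq_zero_iff Ψ ψ).2 fun hm => hψ (h hm), zero_mul]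

/-- The singleton lift `K : Kl(D) → Kl(~PD)` preserves Kleisli composition and
lands in convex sets. -/
theorem stmt16 {X Y Z : Type*} (f : X → PMF Y) (g : Y → PMF Z)
    (hf : ∀ x, (f x).support.Finite) (hg : ∀ y, (g y).support.Finite) :
    (∀ x, kcompD (fun y => ({g y} : Set (PMF Z))) (fun x => ({f x} : Set (PMF Y))) x
        = {(f x).bind g}) ∧
    (∀ φ : PMF Z, φ.support.Finite → clD ({φ} : Set (PMF Z)) = {φ}) := by
  refine ⟨fun x => ?_, fun φ _ => ?_⟩
  · ext χ
    simp only [kcompD, Set.mem_ofPred_eq, Set.mem_singleton_iff, exists_eq_left]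
    constructor
    · rintro ⟨Φ, hΦ, rfl⟩
      -- `Φ y` is constrained only on the support of `f x`; elsewhere its weight vanishes.
      ext z
      rw [PMF.bind_apply, PMF.bind_apply]
      refine tsum_congr fun y => ?_
      by_cases hy : y ∈ (f x).support
      · rw [bind_id_eq_of_support_subset_singleton (hΦ y hy).2]
      · rw [(PMF.apply_eq_zero_iff (f x) y).2 hy, zero_mul, zero_mul]
    · rintro rfl
      exact ⟨fun y => PMF.pure (g y), fun y _ => by simp, by simp⟩
  · ext χ
    simp only [clD, Set.mem_ofPred_eq, Set.mem_singleton_iff]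
    constructor
    · rintro ⟨Ψ, -, hΨ, rfl⟩
      exact bind_id_eq_of_support_subset_singleton hΨ
    · rintro rfl
      exact ⟨PMF.pure χ, by simp, by simp, by simp⟩
end

section
/- Let C and D be types and define h : C ⊕ D → Set (Finset C) by h(inl c) = {{c}} and h(inr d) = ∅. Then for every family 𝒰 of nonempty finite subsets of C ⊕ D, the Kleisli extension h^$(𝒰) := { ⋃_{w∈u} ⋃𝒱_w | u ∈ 𝒰, and for each w ∈ u, 𝒱_w is a nonempty finite subfamily of h(w) } satisfies h^$(𝒰) = { v : Finset C | v is nonempty and v.image Sum.inl ∈ 𝒰 }. In other words, composition with h in the Kleisli category of ~PQ filters out exactly those members of 𝒰 that contain an element of the right summand D, and relabels the remaining ones. -/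
/-!
If `u` contributes a member `W` to the extension, the nonempty subfamilies `𝒱 w ⊆ h w` force `u`
to avoid the right summand (there `h w = ∅`) and force `𝒱 (inl c) = {{c}}`; the union `W` then
satisfies `c ∈ W ↔ inl c ∈ u`, i.e. `W.image inl = u`. Conversely, the choice `𝒱 = h` exhibits `W`
as the member contributed by `W.image inl`.
-/

/-- Kleisli extension for the composite monad `~PQ` of full powerset over
nonempty finite powerset. -/
def kextQ {Y Z : Type*} (h : Y → Set (Finset Z)) (𝒰 : Set (Finset Y)) :
    Set (Finset Z) :=
  { W | ∃ u ∈ 𝒰, ∃ 𝒱 : Y → Set (Finset Z),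
      (∀ w ∈ u, 𝒱 w ⊆ h w ∧ (𝒱 w).Finite ∧ (𝒱 w).Nonempty) ∧
      (↑W : Set Z) = ⋃ w ∈ (u : Set Y), ⋃ V ∈ 𝒱 w, (V : Set Z) }

/-- Composition with `h` (where `h (inl c) = {{c}}` and `h (inr d) = ∅`) in the
Kleisli category of `~PQ` filters out the members of `𝒰` meeting the right
summand `D`, and relabels the remaining ones. -/
theorem stmt18 {C D : Type*} [DecidableEq (C ⊕ D)] (h : C ⊕ D → Set (Finset C))
    (hinl : ∀ c : C, h (Sum.inl c) = {{c}}) (hinr : ∀ d : D, h (Sum.inr d) = ∅)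
    (𝒰 : Set (Finset (C ⊕ D))) (h𝒰 : ∀ u ∈ 𝒰, u.Nonempty) :
    kextQ h 𝒰 = { v : Finset C | v.Nonempty ∧ v.image Sum.inl ∈ 𝒰 } := by
  ext W
  constructor
  · rintro ⟨u, hu, 𝒱, h𝒱, hW⟩
    -- Elements of the right summand admit no nonempty subfamily of `h w = ∅`.
    have hr : ∀ d, Sum.inr d ∉ u := by
      intro d hd
      obtain ⟨hs, -, V, hV⟩ := h𝒱 _ hd
      have := hs hV
      simp [hinr] at this
    have hl : ∀ c, Sum.inl c ∈ u → 𝒱 (Sum.inl c) = {{c}} := by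
      intro c hc
      obtain ⟨hs, -, hne⟩ := h𝒱 _ hc
      rw [hinl] at hs
      exact hne.subset_singleton_iff.mp hs
    have key : ∀ c, c ∈ W ↔ Sum.inl c ∈ u := by
      intro c
      rw [← Finset.mem_coe, hW]
      simp only [Set.mem_iUnion, Finset.mem_coe, exists_prop]
      constructor
      · rintro ⟨w | d, hw, V, hV, hcV⟩
        · rw [hl w hw, Set.mem_singleton_iff] at hV
          subst hV
          rw [Finset.mem_singleton] at hcV
          exact hcV ▸ hw
        · exact (hr d hw).elim
      · intro hc
        exact ⟨_, hc, {c}, by rw [hl c hc]; rfl, Finset.mem_singleton_self c⟩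
    have himg : W.image Sum.inl = u := by
      ext (c | d)
      · simp [key]
      · simp [hr]
    refine ⟨?_, himg ▸ hu⟩
    rw [← Finset.image_nonempty (f := (Sum.inl : C → C ⊕ D)), himg]
    exact h𝒰 u hu
  · rintro ⟨-, hW⟩
    refine ⟨_, hW, h, ?_, ?_⟩
    · intro w hw
      obtain ⟨c, -, rfl⟩ := Finset.mem_image.mp hw
      simp [hinl]
    · ext c
      simp [hinl]
end
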